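/- arXiv:2211.01883 — 3 statements merged into one kernel-verified Lean document; each statement's English description precedes it below -/
import Mathlib

section
/- Gradient-estimation error bound (Lemma 2). Let x̄ ∈ ℝ^d, and for each m ∈ {1,…,M} let u^m ∈ ℝ^{p×d} with Frobenius norm ‖u^m‖ ≤ C_g, v^m ∈ ℝ^p with ‖v^m‖ ≤ C_f, and h^m ∈ ℝ^p. Set w̄ = (1/M)∑_{m=1}^M (u^m)ᵀ v^m. Then ‖w̄ − ∇F(x̄)‖² ≤ (1/M)∑_{m=1}^M ( 2C_f²‖u^m − ∇g^m(x̄)‖² + 4C_g²‖v^m − ∇f^m(h^m)‖² + 4C_g²L_f²‖h^m − g^m(x̄)‖² ). -/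
open Matrix

noncomputable section

/-- Frobenius norm of a real matrix. -/
def frobNorm {p d : ℕ} (A : Matrix (Fin p) (Fin d) ℝ) : ℝ :=
  Real.sqrt (∑ i, ∑ j, A i j ^ 2)

/-- Apply a real matrix to a Euclidean vector. -/
def mApply {p d : ℕ} (A : Matrix (Fin p) (Fin d) ℝ)
    (v : EuclideanSpace ℝ (Fin d)) : EuclideanSpace ℝ (Fin p) :=
  (WithLp.equiv 2 (Fin p → ℝ)).symm (A.mulVec (WithLp.equiv 2 (Fin d → ℝ) v))

theorem frobNorm_sq {p d : ℕ} (A : Matrix (Fin p) (Fin d) ℝ) :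
    frobNorm A ^ 2 = ∑ i, ∑ j, A i j ^ 2 := by
  unfold frobNorm
  exact Real.sq_sqrt (Finset.sum_nonneg fun i _ => Finset.sum_nonneg fun j _ => sq_nonneg _)

theorem mApply_transpose_norm_le {p d : ℕ} (A : Matrix (Fin p) (Fin d) ℝ)
    (v : EuclideanSpace ℝ (Fin p)) : ‖mApply Aᵀ v‖ ≤ frobNorm A * ‖v‖ := by
  have hA : 0 ≤ frobNorm A := Real.sqrt_nonneg _
  refine (sq_le_sq₀ (norm_nonneg _) ?_).1 ?_ ; exact mul_nonneg hA (norm_nonneg _)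
  rw [mul_pow, frobNorm_sq, EuclideanSpace.real_norm_sq_eq, EuclideanSpace.real_norm_sq_eq,
    Finset.sum_comm, Finset.sum_mul]
  refine Finset.sum_le_sum fun j _ => ?_
  have := Finset.sum_mul_sq_le_sq_mul_sq Finset.univ (fun i => A i j) (fun i => v i)
  simpa [mApply, Matrix.mulVec, dotProduct] using this

theorem mApply_split {p d : ℕ} (A B : Matrix (Fin p) (Fin d) ℝ)
    (v w : EuclideanSpace ℝ (Fin p)) :
    mApply Aᵀ v - mApply Bᵀ w = mApply (A - B)ᵀ v + mApply Bᵀ (v - w) := by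
  ext j
  simp [mApply, Matrix.mulVec, dotProduct, ← Finset.sum_sub_distrib, ← Finset.sum_add_distrib]
  refine Finset.sum_congr rfl fun i _ => ?_
  ring

/-- **Lemma 2 (gradient-estimation error bound).**
For matrices `uᵐ` with Frobenius norm at most `Cg`, vectors `vᵐ` with `‖vᵐ‖ ≤ Cf` and vectors
`hᵐ`, the average `w̄ = (1/M)∑ₘ (uᵐ)ᵀvᵐ` satisfies
`‖w̄ − ∇F(x̄)‖² ≤ (1/M)∑ₘ (2Cf²‖uᵐ − ∇gᵐ(x̄)‖² + 4Cg²‖vᵐ − ∇fᵐ(hᵐ)‖² + 4Cg²Lf²‖hᵐ − gᵐ(x̄)‖²)`,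
where `∇F(x̄) = (1/M)∑ₘ (∇gᵐ(x̄))ᵀ∇fᵐ(gᵐ(x̄))`. -/
theorem gradient_estimation_error_bound
    {d p M : ℕ} (hM : 0 < M)
    (g : Fin M → EuclideanSpace ℝ (Fin d) → EuclideanSpace ℝ (Fin p))
    (f : Fin M → EuclideanSpace ℝ (Fin p) → ℝ)
    (Dg : Fin M → EuclideanSpace ℝ (Fin d) → Matrix (Fin p) (Fin d) ℝ)
    (df : Fin M → EuclideanSpace ℝ (Fin p) → EuclideanSpace ℝ (Fin p))
    (Lf Cg Cf : ℝ)
    (hgDeriv : ∀ m x, HasFDerivAt (g m)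
      ((Matrix.toEuclideanLin (Dg m x)).toContinuousLinearMap) x)
    (hfDeriv : ∀ m y, HasGradientAt (f m) (df m y) y)
    (hfLip : ∀ m y₁ y₂, ‖df m y₁ - df m y₂‖ ≤ Lf * ‖y₁ - y₂‖)
    (hgBound : ∀ m x, frobNorm (Dg m x) ≤ Cg)
    (hfBound : ∀ m y, ‖df m y‖ ≤ Cf)
    (xbar : EuclideanSpace ℝ (Fin d))
    (u : Fin M → Matrix (Fin p) (Fin d) ℝ)
    (v : Fin M → EuclideanSpace ℝ (Fin p))
    (h : Fin M → EuclideanSpace ℝ (Fin p))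
    (hu : ∀ m, frobNorm (u m) ≤ Cg)
    (hv : ∀ m, ‖v m‖ ≤ Cf) :
    ‖((M : ℝ)⁻¹ • ∑ m, mApply (u m)ᵀ (v m)) -
        ((M : ℝ)⁻¹ • ∑ m, mApply (Dg m xbar)ᵀ (df m (g m xbar)))‖ ^ 2 ≤
      (M : ℝ)⁻¹ * ∑ m,
        (2 * Cf ^ 2 * frobNorm (u m - Dg m xbar) ^ 2
          + 4 * Cg ^ 2 * ‖v m - df m (h m)‖ ^ 2
          + 4 * Cg ^ 2 * Lf ^ 2 * ‖h m - g m xbar‖ ^ 2) := by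
  have hM' : (0 : ℝ) < M := by exact_mod_cast hM
  rw [← smul_sub, ← Finset.sum_sub_distrib, norm_smul, mul_pow]
  have hJ : ‖∑ m, (mApply (u m)ᵀ (v m) - mApply (Dg m xbar)ᵀ (df m (g m xbar)))‖ ^ 2 ≤
      M * ∑ m, ‖mApply (u m)ᵀ (v m) - mApply (Dg m xbar)ᵀ (df m (g m xbar))‖ ^ 2 := by
    refine (pow_le_pow_left₀ (norm_nonneg _) (norm_sum_le _ _) 2).trans ?_
    have := sq_sum_le_card_mul_sum_sq (s := (Finset.univ : Finset (Fin M)))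
      (f := fun m => ‖mApply (u m)ᵀ (v m) - mApply (Dg m xbar)ᵀ (df m (g m xbar))‖)
    simpa using this
  have hS : ∑ m, ‖mApply (u m)ᵀ (v m) - mApply (Dg m xbar)ᵀ (df m (g m xbar))‖ ^ 2 ≤ ∑ m,
        (2 * Cf ^ 2 * frobNorm (u m - Dg m xbar) ^ 2
          + 4 * Cg ^ 2 * ‖v m - df m (h m)‖ ^ 2
          + 4 * Cg ^ 2 * Lf ^ 2 * ‖h m - g m xbar‖ ^ 2) := by
    refine Finset.sum_le_sum fun m _ => ?_
    have ha : 0 ≤ frobNorm (u m - Dg m xbar) := Real.sqrt_nonneg _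
    have hCg : 0 ≤ Cg := (Real.sqrt_nonneg _).trans (hu m)
    have h1 : ‖mApply (u m - Dg m xbar)ᵀ (v m)‖ ≤ frobNorm (u m - Dg m xbar) * Cf :=
      (mApply_transpose_norm_le _ _).trans (mul_le_mul_of_nonneg_left (hv m) ha)
    have h3 : ‖v m - df m (g m xbar)‖ ≤ ‖v m - df m (h m)‖ + Lf * ‖h m - g m xbar‖ :=
      (norm_sub_le_norm_sub_add_norm_sub _ (df m (h m)) _).trans
        (add_le_add le_rfl (hfLip m _ _))
    have h2 : ‖mApply (Dg m xbar)ᵀ (v m - df m (g m xbar))‖ ≤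
        Cg * (‖v m - df m (h m)‖ + Lf * ‖h m - g m xbar‖) :=
      (mApply_transpose_norm_le _ _).trans
        (mul_le_mul (hgBound m xbar) h3 (norm_nonneg _) hCg)
    rw [mApply_split]
    refine (pow_le_pow_left₀ (norm_nonneg _) ((norm_add_le _ _).trans (add_le_add h1 h2)) 2).trans ?_
    generalize frobNorm (u m - Dg m xbar) = a
    generalize ‖v m - df m (h m)‖ = b
    generalize ‖h m - g m xbar‖ = c
    nlinarith [sq_nonneg (a * Cf - Cg * (b + Lf * c)), sq_nonneg (Cg * (b - Lf * c))]
  calc _ ≤ ‖(M : ℝ)⁻¹‖ ^ 2 * (M * _) :=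
        mul_le_mul_of_nonneg_left (hJ.trans (mul_le_mul_of_nonneg_left hS hM'.le)) (sq_nonneg _)
    _ = _ := by
        rw [Real.norm_of_nonneg (inv_nonneg.2 hM'.le)]
        field_simp
end
end

section
/- One-step descent of the adaptive preconditioned update. Let F : ℝ^d → ℝ be differentiable with L-Lipschitz gradient, let A be a symmetric positive definite d×d real matrix with A ⪰ ρI_d for some ρ > 0, let w ∈ ℝ^d, and let η, γ > 0 satisfy γ ≤ ρ/(2Lη). Define x⁺ = x − γη A^{-1} w (equivalently x⁺ = argmin_z {⟨w, z⟩ + (1/(2ηγ))(z−x)ᵀA(z−x)}). Then F(x⁺) ≤ F(x) + (ηγ/ρ)‖∇F(x) − w‖² − (ρ/(2ηγ))‖x⁺ − x‖². -/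
open Matrix

noncomputable section

theorem descent_aux {d : ℕ} (F : EuclideanSpace ℝ (Fin d) → ℝ) (L : ℝ)
    (hF : Differentiable ℝ F)
    (hLip : ∀ x₁ x₂ : EuclideanSpace ℝ (Fin d),
      ‖gradient F x₁ - gradient F x₂‖ ≤ L * ‖x₁ - x₂‖)
    (x v : EuclideanSpace ℝ (Fin d)) :
    F (x + v) ≤ F x + inner ℝ (gradient F x) v + L / 2 * ‖v‖ ^ 2 := by
  have hd : ∀ t : ℝ, HasDerivAt
      (fun t : ℝ => F (x + t • v) - t * inner ℝ (gradient F x) v - L / 2 * ‖v‖ ^ 2 * t ^ 2)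
      (inner ℝ (gradient F (x + t • v)) v - inner ℝ (gradient F x) v - L * ‖v‖ ^ 2 * t) t := by
    intro t
    have h1 : HasDerivAt (fun t : ℝ => x + t • v) v t := by
      simpa using ((hasDerivAt_id t).smul_const v).const_add x
    have h2 := (hF (x + t • v)).hasGradientAt.hasFDerivAt.comp_hasDerivAt t h1
    have h3 := (h2.sub ((hasDerivAt_id t).mul_const (inner ℝ (gradient F x) v))).sub
      ((hasDerivAt_pow 2 t).const_mul (L / 2 * ‖v‖ ^ 2))
    refine HasDerivAt.congr_deriv h3 ?_
    simp
    ring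
  have hanti := antitoneOn_of_deriv_nonpos (convex_Icc (0 : ℝ) 1)
    (fun t _ => (hd t).continuousAt.continuousWithinAt)
    (fun t _ => (hd t).differentiableAt.differentiableWithinAt)
    (fun t ht => by
      rw [(hd t).deriv, ← inner_sub_left]
      rw [interior_Icc] at ht
      have h1 := real_inner_le_norm (gradient F (x + t • v) - gradient F x) v
      have h2 := hLip (x + t • v) x
      rw [add_sub_cancel_left, norm_smul, Real.norm_of_nonneg ht.1.le] at h2
      have h3 := mul_le_mul_of_nonneg_right h2 (norm_nonneg v)
      linarith)
  have h := hanti (Set.left_mem_Icc.2 zero_le_one) (Set.right_mem_Icc.2 zero_le_one) zero_le_one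
  simp at h ⊢
  linarith

theorem quad_aux {d : ℕ} (A : Matrix (Fin d) (Fin d) ℝ) (hA : A.IsHermitian) (ρ : ℝ)
    (heig : ∀ i, ρ ≤ hA.eigenvalues i) (u : EuclideanSpace ℝ (Fin d)) :
    ρ * ‖u‖ ^ 2 ≤ inner ℝ (mApply A u) u := by
  have hsym : ∀ a b : EuclideanSpace ℝ (Fin d),
      inner ℝ (mApply A a) b = inner ℝ a (mApply A b) := by
    intro a b
    have := (Matrix.isSymmetric_toEuclideanLin_iff.2 hA) a b
    exact this
  have hb : ∀ i, mApply A (hA.eigenvectorBasis i)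
      = hA.eigenvalues i • hA.eigenvectorBasis i := by
    intro i
    have := hA.mulVec_eigenvectorBasis i
    ext j
    exact congrFun this j
  rw [← hA.eigenvectorBasis.sum_inner_mul_inner (mApply A u) u, ← real_inner_self_eq_norm_sq,
    ← hA.eigenvectorBasis.sum_inner_mul_inner u u, Finset.mul_sum]
  refine Finset.sum_le_sum fun i _ => ?_
  rw [hsym, hb, inner_smul_right, real_inner_comm u, mul_assoc]
  exact mul_le_mul_of_nonneg_right (heig i) (mul_self_nonneg _)

/-- **One-step descent of the adaptive preconditioned update.**
If `F` is differentiable with `L`-Lipschitz gradient, `A` is symmetric with all eigenvalues at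
least `ρ > 0`, and `γ ≤ ρ/(2Lη)`, then the update `x⁺ = x − γη A⁻¹ w` satisfies
`F(x⁺) ≤ F(x) + (ηγ/ρ)‖∇F(x) − w‖² − (ρ/(2ηγ))‖x⁺ − x‖²`. -/
theorem one_step_descent_adaptive
    {d : ℕ} (F : EuclideanSpace ℝ (Fin d) → ℝ) (L ρ η γ : ℝ)
    (hF : Differentiable ℝ F)
    (hLip : ∀ x₁ x₂ : EuclideanSpace ℝ (Fin d),
      ‖gradient F x₁ - gradient F x₂‖ ≤ L * ‖x₁ - x₂‖)
    (A : Matrix (Fin d) (Fin d) ℝ) (hA : A.IsHermitian)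
    (hρ : 0 < ρ) (heig : ∀ i, ρ ≤ hA.eigenvalues i)
    (hη : 0 < η) (hγ : 0 < γ) (hγρ : γ ≤ ρ / (2 * L * η))
    (x w : EuclideanSpace ℝ (Fin d)) :
    F (x - (γ * η) • mApply A⁻¹ w) ≤
      F x + (η * γ / ρ) * ‖gradient F x - w‖ ^ 2
        - (ρ / (2 * η * γ)) * ‖(x - (γ * η) • mApply A⁻¹ w) - x‖ ^ 2 := by
  have hL : 0 < L := by
    by_contra hL
    have : ρ / (2 * L * η) ≤ 0 :=
      div_nonpos_of_nonneg_of_nonpos hρ.le (by nlinarith)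
    linarith
  have hLs : L * (γ * η) ≤ ρ / 2 := by
    rw [le_div_iff₀ (by positivity)] at hγρ
    linarith
  have hdet : IsUnit A.det :=
    (Matrix.isUnit_iff_isUnit_det A).1
      (hA.posDef_iff_eigenvalues_pos.2 fun i => hρ.trans_le (heig i)).isUnit
  set u := mApply A⁻¹ w with hu
  have hAu : mApply A u = w := by
    simp [hu, mApply, Matrix.mulVec_mulVec, Matrix.mul_nonsing_inv A hdet]
  have hq := quad_aux A hA ρ heig u
  rw [hAu] at hq
  have hs : 0 < γ * η := mul_pos hγ hη
  have hdesc := descent_aux F L hF hLip x (-((γ * η) • u))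
  rw [← sub_eq_add_neg, norm_neg, norm_smul, Real.norm_of_nonneg hs.le, inner_neg_right,
    inner_smul_right] at hdesc
  rw [sub_sub_cancel_left, norm_neg, norm_smul, Real.norm_of_nonneg hs.le]
  have hcs := neg_le_of_abs_le (abs_real_inner_le_norm (gradient F x - w) u)
  rw [inner_sub_left] at hcs
  rw [mul_comm η γ, mul_assoc 2 η γ, mul_comm η γ]
  generalize γ * η = s at *
  generalize ‖gradient F x - w‖ = G at *
  generalize ‖u‖ = U at *
  have e1 : ρ / (2 * s) * (s * U) ^ 2 = s * (ρ / 2 * U ^ 2) := by field_simp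
  have e2 : G * U ≤ G ^ 2 / ρ + ρ / 4 * U ^ 2 := by
    have : G ^ 2 / ρ + ρ / 4 * U ^ 2 - G * U = (G - ρ / 2 * U) ^ 2 / ρ := by
      field_simp
      ring
    have : 0 ≤ (G - ρ / 2 * U) ^ 2 / ρ := by positivity
    linarith
  have e3 : L / 2 * (s * U) ^ 2 ≤ s * (ρ / 4 * U ^ 2) := by
    have := mul_le_mul_of_nonneg_right hLs (show 0 ≤ s * U ^ 2 / 2 by positivity)
    linarith
  have e4 : s / ρ * G ^ 2 = s * (G ^ 2 / ρ) := by ring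
  have e5 : 0 ≤ s * (G ^ 2 / ρ + ρ / 4 * U ^ 2 - G * U) :=
    mul_nonneg hs.le (by linarith)
  have e6 : 0 ≤ s * (inner ℝ (gradient F x) u + G * U - ρ * U ^ 2) :=
    mul_nonneg hs.le (by linarith)
  rw [e1, e4]
  linarith
end
end

section
/- Heterogeneity bound for outer gradients (Lemma A.10, first inequality). Let x̄ ∈ ℝ^d and h^1,…,h^M ∈ ℝ^p. Then ∑_{m=1}^M ‖∇f^m(h^m) − (1/M)∑_{j=1}^M ∇f^j(h^j)‖² ≤ 8L_f² ∑_{m=1}^M ‖h^m − g^m(x̄)‖² + 4Mδ_f² + 4ML_f²δ_g². -/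
noncomputable section

/-- **Heterogeneity bound for outer gradients (Lemma A.10, first inequality).**
If each `∇fᵐ` is `Lf`-Lipschitz, the gradients are `δf`-heterogeneous and the inner functions
are `δg`-heterogeneous, then
`∑ₘ ‖∇fᵐ(hᵐ) − (1/M)∑ⱼ ∇fʲ(hʲ)‖² ≤ 8Lf² ∑ₘ ‖hᵐ − gᵐ(x̄)‖² + 4Mδf² + 4MLf²δg²`. -/
theorem heterogeneity_outer_gradients
    {d p M : ℕ} (hM : 0 < M)
    (g : Fin M → EuclideanSpace ℝ (Fin d) → EuclideanSpace ℝ (Fin p))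
    (f : Fin M → EuclideanSpace ℝ (Fin p) → ℝ)
    (df : Fin M → EuclideanSpace ℝ (Fin p) → EuclideanSpace ℝ (Fin p))
    (Lf δf δg : ℝ)
    (hfDeriv : ∀ m y, HasGradientAt (f m) (df m y) y)
    (hfLip : ∀ m y₁ y₂, ‖df m y₁ - df m y₂‖ ≤ Lf * ‖y₁ - y₂‖)
    (hhetf : ∀ m j y, ‖df m y - df j y‖ ≤ δf)
    (hhetg : ∀ m j x, ‖g m x - g j x‖ ≤ δg)
    (xbar : EuclideanSpace ℝ (Fin d))
    (h : Fin M → EuclideanSpace ℝ (Fin p)) :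
    ∑ m, ‖df m (h m) - (M : ℝ)⁻¹ • ∑ j, df j (h j)‖ ^ 2 ≤
      8 * Lf ^ 2 * ∑ m, ‖h m - g m xbar‖ ^ 2
        + 4 * (M : ℝ) * δf ^ 2 + 4 * (M : ℝ) * Lf ^ 2 * δg ^ 2 := by
  have hMR : (0 : ℝ) < M := by exact_mod_cast hM
  have sqle : ∀ a b : ℝ, 0 ≤ a → a ≤ b → a ^ 2 ≤ b ^ 2 := fun a b ha hab =>
    pow_le_pow_left₀ ha hab 2
  have pair : ∀ m j, ‖df m (h m) - df j (h j)‖ ^ 2 ≤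
      4 * Lf ^ 2 * ‖h m - g m xbar‖ ^ 2 + 4 * Lf ^ 2 * ‖h j - g j xbar‖ ^ 2
        + 4 * δf ^ 2 + 4 * Lf ^ 2 * δg ^ 2 := by
    intro m j
    have e : df m (h m) - df j (h j) =
        (df m (h m) - df m (g m xbar)) + (df m (g m xbar) - df j (g m xbar))
        + (df j (g m xbar) - df j (g j xbar)) + (df j (g j xbar) - df j (h j)) := by abel
    have t := norm_add₄_le (a := df m (h m) - df m (g m xbar))
      (b := df m (g m xbar) - df j (g m xbar))
      (c := df j (g m xbar) - df j (g j xbar)) (d := df j (g j xbar) - df j (h j))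
    rw [← e] at t
    have h1 := sqle _ _ (norm_nonneg _) (hfLip m (h m) (g m xbar))
    have h2 := sqle _ _ (norm_nonneg _) (hhetf m j (g m xbar))
    have h3 := sqle _ _ (norm_nonneg _) (hfLip j (g m xbar) (g j xbar))
    have h4 := sqle _ _ (norm_nonneg _) (hfLip j (g j xbar) (h j))
    have h5 := sqle _ _ (norm_nonneg _) (hhetg m j xbar)
    have h6 := mul_le_mul_of_nonneg_left h5 (sq_nonneg Lf)
    rw [norm_sub_rev (g j xbar) (h j)] at h4
    rw [mul_pow] at h1 h3 h4
    have h0 := sqle _ _ (norm_nonneg _) t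
    generalize ‖df m (h m) - df m (g m xbar)‖ = a at *
    generalize ‖df m (g m xbar) - df j (g m xbar)‖ = b at *
    generalize ‖df j (g m xbar) - df j (g j xbar)‖ = c at *
    generalize ‖df j (g j xbar) - df j (h j)‖ = d at *
    have h7 : (a + b + c + d) ^ 2 ≤ 4 * (a ^ 2 + b ^ 2 + c ^ 2 + d ^ 2) := by
      nlinarith [sq_nonneg (a - b), sq_nonneg (a - c), sq_nonneg (a - d),
        sq_nonneg (b - c), sq_nonneg (b - d), sq_nonneg (c - d)]
    linarith
  have single : ∀ m, ‖df m (h m) - (M : ℝ)⁻¹ • ∑ j, df j (h j)‖ ^ 2 ≤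
      (M : ℝ)⁻¹ * ∑ j, ‖df m (h m) - df j (h j)‖ ^ 2 := by
    intro m
    have e : df m (h m) - (M : ℝ)⁻¹ • ∑ j, df j (h j) =
        (M : ℝ)⁻¹ • ∑ j, (df m (h m) - df j (h j)) := by
      rw [Finset.sum_sub_distrib, smul_sub, Finset.sum_const, Finset.card_univ, Fintype.card_fin,
        ← Nat.cast_smul_eq_nsmul ℝ, smul_smul, inv_mul_cancel₀ hMR.ne', one_smul]
    have k1 := sqle _ _ (norm_nonneg _)
      (norm_sum_le Finset.univ (fun j => df m (h m) - df j (h j)))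
    have k2 := sq_sum_le_card_mul_sum_sq (s := (Finset.univ : Finset (Fin M)))
      (f := fun j => ‖df m (h m) - df j (h j)‖)
    rw [Finset.card_univ, Fintype.card_fin] at k2
    rw [e, norm_smul, mul_pow, Real.norm_of_nonneg (inv_pos.2 hMR).le]
    calc _ ≤ ((M : ℝ)⁻¹) ^ 2 * (M * ∑ j, ‖df m (h m) - df j (h j)‖ ^ 2) :=
          mul_le_mul_of_nonneg_left (k1.trans k2) (sq_nonneg _)
      _ = _ := by field_simp
  calc _ ≤ ∑ m, (M : ℝ)⁻¹ * ∑ j, (4 * Lf ^ 2 * ‖h m - g m xbar‖ ^ 2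
        + 4 * Lf ^ 2 * ‖h j - g j xbar‖ ^ 2 + 4 * δf ^ 2 + 4 * Lf ^ 2 * δg ^ 2) :=
        Finset.sum_le_sum fun m _ => (single m).trans
          (mul_le_mul_of_nonneg_left (Finset.sum_le_sum fun j _ => pair m j)
            (inv_pos.2 hMR).le)
    _ = _ := by
      simp only [Finset.sum_add_distrib, ← Finset.mul_sum, Finset.sum_const, Finset.card_univ,
        Fintype.card_fin, nsmul_eq_mul]
      field_simp
      ring
end
end
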